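/- For every integer n ≥ 3, every 2-connected simple graph on n vertices in which no two cycles have the same length has at most n + ⌊(√(8n−15)−3)/2⌋ edges. -/

import Mathlib

/-!
Let `W` be the cycle space of `G` modulo 2, of dimension `r`, so that `G` has at most `n + r - 1`
edges. In a basis of `W` in reduced echelon form, join two basis vectors when their supports meet.
This overlap graph is connected, since 2-connectedness means that `W` does not split along any
partition of the edges. The basis vectors on a geodesic of the overlap graph add up to the indicator
of a single cycle: a labelling supported inside that of the sum has the same coefficient at
consecutive vertices of the geodesic. The pivots recover the geodesic, hence its endpoints, from the
cycle. So `G` has at least `(r + 1).choose 2` cycles, one for each unordered pair of basis vectors;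
as their lengths are distinct numbers in `{3, …, n}`, `(r + 1).choose 2 ≤ n - 2`.
-/

open Module Set

section Geodesics

variable {V : Type*} {G : SimpleGraph V} {u v u' v' : V} {p : G.Walk u v} {q : G.Walk u' v'}

theorem apply_eq_of_reachable {α : Type*} {f : V → α} (hf : ∀ ⦃a b⦄, G.Adj a b → f a = f b)
    (h : G.Reachable u v) : f u = f v := by
  obtain ⟨p⟩ := h
  induction p with
  | nil => rfl
  | cons hadj _ ih => exact (hf hadj).trans ih

theorem dist_getVert_getVert_of_length_eq_dist (hp : p.length = G.dist u v) {i j : ℕ}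
    (hij : i ≤ j) (hj : j ≤ p.length) : G.dist (p.getVert i) (p.getVert j) = j - i := by
  have hsub : ((p.drop i).take (j - i)).IsSubwalk p :=
    ((p.drop i).isSubwalk_take _).trans (p.isSubwalk_drop i)
  have hlen := SimpleGraph.length_eq_dist_of_subwalk hp hsub
  rw [SimpleGraph.Walk.take_length, SimpleGraph.Walk.drop_length,
    SimpleGraph.Walk.drop_getVert, Nat.add_sub_cancel' hij] at hlen
  omega

theorem cliqueFreeOn_support_of_length_eq_dist (hp : p.length = G.dist u v) :
    G.CliqueFreeOn {x | x ∈ p.support} 3 := by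
  classical
  intro t ht hclique
  obtain ⟨a, b, c, hab, hac, hbc, rfl⟩ := SimpleGraph.is3Clique_iff.1 hclique
  have mem_support {x} (hx : x ∈ ({a, b, c} : Finset V)) : ∃ i, p.getVert i = x ∧ i ≤ p.length :=
    SimpleGraph.Walk.mem_support_iff_exists_getVert.1 (ht hx)
  obtain ⟨i, rfl, hi⟩ := mem_support (x := a) (by simp)
  obtain ⟨j, rfl, hj⟩ := mem_support (x := b) (by simp)
  obtain ⟨k, rfl, hk⟩ := mem_support (x := c) (by simp)
  have index_diff {i j : ℕ} (hi : i ≤ p.length) (hj : j ≤ p.length)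
      (hadj : G.Adj (p.getVert i) (p.getVert j)) : i + 1 = j ∨ j + 1 = i := by
    have hdist := SimpleGraph.dist_eq_one_iff_adj.2 hadj
    rcases le_total i j with hij | hji
    · rw [dist_getVert_getVert_of_length_eq_dist hp hij hj] at hdist
      omega
    · rw [SimpleGraph.dist_comm, dist_getVert_getVert_of_length_eq_dist hp hji hi] at hdist
      omega
  have := index_diff hi hj hab
  have := index_diff hi hk hac
  have := index_diff hj hk hbc
  omega

theorem dist_le_and_sym2_eq_of_mem_support (hp : p.length = G.dist u v) {a b : V}
    (ha : a ∈ p.support) (hb : b ∈ p.support) :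
    G.dist a b ≤ G.dist u v ∧ (G.dist a b = G.dist u v → s(a, b) = s(u, v)) := by
  obtain ⟨i, rfl, hi⟩ := SimpleGraph.Walk.mem_support_iff_exists_getVert.1 ha
  obtain ⟨j, rfl, hj⟩ := SimpleGraph.Walk.mem_support_iff_exists_getVert.1 hb
  wlog hij : i ≤ j generalizing i j
  · rw [SimpleGraph.dist_comm, Sym2.eq_swap]
    exact this j hj hb i hi ha (le_of_not_ge hij)
  rw [dist_getVert_getVert_of_length_eq_dist hp hij hj, ← hp]
  refine ⟨by omega, fun h ↦ ?_⟩
  obtain rfl : i = 0 := by omega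
  obtain rfl : j = p.length := by omega
  simp

theorem sym2_eq_of_support_eq (hp : p.length = G.dist u v) (hq : q.length = G.dist u' v')
    (h : ∀ x, x ∈ p.support ↔ x ∈ q.support) : s(u, v) = s(u', v') := by
  have hpq := dist_le_and_sym2_eq_of_mem_support hq ((h u).1 p.start_mem_support)
    ((h v).1 p.end_mem_support)
  have hqp := dist_le_and_sym2_eq_of_mem_support hp ((h u').2 q.start_mem_support)
    ((h v').2 q.end_mem_support)
  exact hpq.2 (hpq.1.antisymm hqp.1)

end Geodesics

section ReducedBasis

universe u

variable {K κ : Type*} {E : Type u} [Field K] {W : Submodule K (E → K)}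

/-- A basis of a subspace of `E → K` in reduced echelon form with pivots `e`: the coefficient of
a vector at a basis element is its value at the corresponding pivot. -/
def IsReducedEchelon (b : Basis κ K W) (e : κ → E) : Prop :=
  ∀ w k, b.repr w k = (w : E → K) (e k)

/-- The intersection graph of a family of sets: two distinct indices are adjacent when their sets
meet. -/
def intersectionGraph (s : κ → Set E) : SimpleGraph κ where
  Adj i j := i ≠ j ∧ (s i ∩ s j).Nonempty
  symm := ⟨fun i j h ↦ ⟨h.1.symm, inter_comm (s i) (s j) ▸ h.2⟩⟩
  loopless := ⟨fun _ h ↦ h.1 rfl⟩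

/-- The intersection graph of the supports of the vectors of a basis. For a cycle space, it is the
graph of overlaps of the fundamental cycles. -/
abbrev overlapGraph (b : Basis κ K W) : SimpleGraph κ :=
  intersectionGraph fun k ↦ (b k : E → K).support

/-- A linear code which is not the direct sum of two codes living on complementary nonempty sets of
coordinates; equivalently, the matroid whose circuits are the minimal supports is connected. -/
def IsIndecomposable (W : Submodule K (E → K)) : Prop :=
  ∀ S : Set E, (∀ w ∈ W, S.indicator w ∈ W) → S = ∅ ∨ S = univ

/-- A minimal nonempty support of a vector of `W`. -/
def IsCircuit (W : Submodule K (E → K)) : Set E → Prop :=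
  Minimal fun s ↦ ∃ w ∈ W, w ≠ 0 ∧ w.support = s

theorem exists_isReducedEchelon_basis [FiniteDimensional K W] :
    ∃ (κ : Type u) (b : Basis κ K W) (e : κ → E), IsReducedEchelon b e := by
  let eval (x : E) : Dual K W := LinearMap.proj x ∘ₗ W.subtype
  have span_eval : Submodule.span K (range eval) = ⊤ := by
    rw [← Subspace.dualCoannihilator_dualAnnihilator_eq (W := Submodule.span K (range eval)),
      Submodule.dualAnnihilator_eq_top_iff, eq_bot_iff]
    intro w hw
    ext x
    exact (Submodule.mem_dualCoannihilator w).1 hw _ (Submodule.subset_span ⟨x, rfl⟩)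
  obtain ⟨κ, e, -, hspan, hindep⟩ := exists_linearIndependent' K eval
  let dualBasis : Basis κ K (Dual K W) := .mk hindep (by rw [hspan, span_eval])
  have : Finite κ := Module.Finite.finite_basis dualBasis
  classical
  refine ⟨κ, dualBasis.dualBasis.map (evalEquiv K W).symm, e, fun w k ↦ ?_⟩
  simp [dualBasis, eval]

namespace IsReducedEchelon

variable {b : Basis κ K W} {e : κ → E}

theorem apply_pivot [DecidableEq κ] (hb : IsReducedEchelon b e) (l k : κ) :
    (b l : E → K) (e k) = if l = k then 1 else 0 := by
  rw [← hb, b.repr_self, Finsupp.single_apply]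

theorem sum_apply_pivot [DecidableEq κ] (hb : IsReducedEchelon b e) (P : Finset κ) (k : κ) :
    ((∑ l ∈ P, b l : W) : E → K) (e k) = if k ∈ P then 1 else 0 := by
  simp [hb.apply_pivot]

theorem apply_pivot_eq_zero (hb : IsReducedEchelon b e) {P : Finset κ} {w : E → K}
    (hwP : w.support ⊆ (∑ k ∈ P, b k : W).1.support) {k : κ} (hk : k ∉ P) : w (e k) = 0 := by
  classical
  exact Function.notMem_support.1 fun hkw ↦ hwP hkw (by rw [hb.sum_apply_pivot, if_neg hk])

theorem apply_eq_sum (hb : IsReducedEchelon b e) {w : E → K} (hw : w ∈ W) {P : Finset κ}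
    (hP : ∀ k ∉ P, w (e k) = 0) (x : E) : w x = ∑ k ∈ P, w (e k) * (b k : E → K) x := by
  have repr_eq_zero : ∀ k ∉ P, b.repr ⟨w, hw⟩ k = 0 := fun k hk ↦ (hb _ k).trans (hP k hk)
  have hsum := congrArg (fun v : W ↦ (v : E → K) x) (b.linearCombination_repr ⟨w, hw⟩)
  rw [Finsupp.linearCombination_apply, Finsupp.sum_of_support_subset (s := P) _
    (fun k hk ↦ by_contra fun hkP ↦ Finsupp.mem_support_iff.1 hk (repr_eq_zero k hkP)) _
    (by simp)] at hsum
  simpa [hb ⟨w, hw⟩] using hsum.symm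

theorem overlapGraph_preconnected [Finite κ] (hb : IsReducedEchelon b e) (hW : IsIndecomposable W) :
    (overlapGraph b).Preconnected := by
  classical
  have := Fintype.ofFinite κ
  intro i j
  have mem_support_pivot (k : κ) : e k ∈ (b k : E → K).support := by
    simp [hb.apply_pivot]
  let component := Finset.univ.filter ((overlapGraph b).Reachable i)
  have mem_component {k} : k ∈ component ↔ (overlapGraph b).Reachable i k := by simp [component]
  let S : Set E := ⋃ k ∈ component, (b k : E → K).support
  have eq_zero_of_notMem {k} (hk : k ∉ component) {x} (hx : x ∈ S) : (b k : E → K) x = 0 := by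
    obtain ⟨l, hl, hlx⟩ := mem_iUnion₂.1 hx
    by_contra hkx
    have hadj : (overlapGraph b).Adj l k := ⟨fun h ↦ hk (h ▸ hl), x, hlx, hkx⟩
    exact hk (mem_component.2 ((mem_component.1 hl).trans hadj.reachable))
  have indicator_mem : ∀ w ∈ W, S.indicator w ∈ W := by
    intro w hw
    have : S.indicator w = ∑ k ∈ component, w (e k) • (b k : E → K) := by
      ext x
      rw [Finset.sum_apply]
      by_cases hx : x ∈ S
      · rw [indicator_of_mem hx, hb.apply_eq_sum hw (P := .univ) (by simp)]
        refine (Finset.sum_subset component.subset_univ fun k _ hk ↦ ?_).symm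
        rw [eq_zero_of_notMem hk hx, mul_zero]
      · rw [indicator_of_notMem hx]
        refine (Finset.sum_eq_zero fun k hk ↦ ?_).symm
        have : (b k : E → K) x = 0 := by
          by_contra hkx
          exact hx (mem_iUnion₂.2 ⟨k, hk, hkx⟩)
        simp [this]
    rw [this]
    exact sum_mem fun k _ ↦ W.smul_mem _ (b k).2
  have S_eq_univ : S = univ := (hW S indicator_mem).resolve_left
    (nonempty_iff_ne_empty.1 ⟨e i, mem_iUnion₂.2 ⟨i, mem_component.2 .rfl, mem_support_pivot i⟩⟩)
  by_contra hij
  exact mem_support_pivot j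
    (eq_zero_of_notMem (mt mem_component.1 hij) (S_eq_univ ▸ mem_univ (e j)))

end IsReducedEchelon

end ReducedBasis

section Binary

theorem sum_mul_eq_add_of_cliqueFreeOn {R κ E : Type*} [Semiring R] {g : κ → E → R} {P : Finset κ}
    (hP : (intersectionGraph fun k ↦ (g k).support).CliqueFreeOn P 3) {i j : κ} (hi : i ∈ P)
    (hj : j ∈ P) (hij : i ≠ j) {x : E} (hix : g i x ≠ 0) (hjx : g j x ≠ 0) (f : κ → R) :
    ∑ k ∈ P, f k * g k x = f i * g i x + f j * g j x := by
  classical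
  rw [← Finset.sum_pair (f := fun k ↦ f k * g k x) hij]
  refine (Finset.sum_subset (by simp [Finset.insert_subset_iff, hi, hj]) fun k hk hkij ↦ ?_).symm
  by_contra hne
  have hkx : g k x ≠ 0 := right_ne_zero_of_mul hne
  obtain ⟨hki, hkj⟩ : k ≠ i ∧ k ≠ j := by simpa using hkij
  exact hP (t := {i, j, k}) (by simp [insert_subset_iff, hi, hj, hk])
    (SimpleGraph.is3Clique_triple_iff.2
      ⟨⟨hij, x, hix, hjx⟩, ⟨hki.symm, x, hix, hkx⟩, hkj.symm, x, hjx, hkx⟩)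

variable {E κ : Type*} {W : Submodule (ZMod 2) (E → ZMod 2)}

namespace IsReducedEchelon

variable {b : Basis κ (ZMod 2) W} {e : κ → E}

theorem apply_pivot_eq_of_adj (hb : IsReducedEchelon b e) {P : Finset κ}
    (hP : (overlapGraph b).CliqueFreeOn P 3) {w : E → ZMod 2} (hw : w ∈ W)
    (hwP : w.support ⊆ (∑ k ∈ P, b k : W).1.support) {i j : κ} (hi : i ∈ P) (hj : j ∈ P)
    (hij : (overlapGraph b).Adj i j) : w (e i) = w (e j) := by
  classical
  have eq_one_of_ne_zero : ∀ z : ZMod 2, z ≠ 0 → z = 1 := by decide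
  obtain ⟨hne, x, hix, hjx⟩ := hij
  have sum_apply (f : κ → ZMod 2) : ∑ k ∈ P, f k * (b k : E → ZMod 2) x = f i + f j := by
    rw [sum_mul_eq_add_of_cliqueFreeOn hP hi hj hne hix hjx, eq_one_of_ne_zero _ hix,
      eq_one_of_ne_zero _ hjx, mul_one, mul_one]
  have apply_eq_zero : w x = 0 := by
    refine Function.notMem_support.1 fun hxw ↦ hwP hxw ?_
    simpa [CharTwo.add_self_eq_zero] using sum_apply 1
  rwa [hb.apply_eq_sum hw fun _ ↦ hb.apply_pivot_eq_zero hwP, sum_apply,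
    CharTwo.add_eq_zero] at apply_eq_zero

theorem isCircuit_sum (hb : IsReducedEchelon b e) {P : Finset κ}
    (hconn : ((overlapGraph b).induce P).Connected) (hP : (overlapGraph b).CliqueFreeOn P 3) :
    IsCircuit W (∑ k ∈ P, b k : W).1.support := by
  classical
  obtain ⟨⟨i, hi⟩⟩ := hconn.nonempty
  refine ⟨⟨_, (∑ k ∈ P, b k).2, fun h ↦ ?_, rfl⟩, ?_⟩
  · simpa [h, Finset.mem_coe.1 hi] using hb.sum_apply_pivot P i
  rintro _ ⟨w, hw, hw0, rfl⟩ hwP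
  have apply_pivot_eq : ∀ k ∈ P, w (e k) = w (e i) := fun k hk ↦
    apply_eq_of_reachable (f := fun k : (P : Set κ) ↦ w (e k))
      (fun k l hkl ↦ hb.apply_pivot_eq_of_adj hP hw hwP k.2 l.2 hkl)
      (hconn.preconnected ⟨k, hk⟩ ⟨i, hi⟩)
  have apply_eq (x : E) : w x = w (e i) * (∑ k ∈ P, b k : W).1 x := by
    rw [hb.apply_eq_sum hw fun _ ↦ hb.apply_pivot_eq_zero hwP, Finset.sum_congr rfl fun k hk ↦ by
      rw [apply_pivot_eq k hk], ← Finset.mul_sum]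
    simp
  have hwi : w (e i) ≠ 0 := fun h ↦
    hw0 (funext fun x ↦ (apply_eq x).trans (mul_eq_zero_of_left h _))
  intro x hx
  rw [Function.mem_support, apply_eq]
  exact mul_ne_zero hwi hx

end IsReducedEchelon

theorem choose_two_le_ncard_circuits [Finite E] (hW : IsIndecomposable W) :
    (finrank (ZMod 2) W + 1).choose 2 ≤ {s | IsCircuit W s}.ncard := by
  classical
  obtain ⟨κ, b, e, hb⟩ := exists_isReducedEchelon_basis (W := W)
  have : Finite κ := Module.Finite.finite_basis b
  have := Fintype.ofFinite κ
  choose geodesic hgeodesic using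
    fun i j ↦ (hb.overlapGraph_preconnected hW i j).exists_walk_length_eq_dist
  let circuit (z : κ × κ) : Set E :=
    (∑ k ∈ (geodesic z.1 z.2).support.toFinset, b k : W).1.support
  have isCircuit_circuit (z : κ × κ) : IsCircuit W (circuit z) := by
    refine hb.isCircuit_sum ?_ ?_
    · rw [List.coe_toFinset]
      exact (geodesic z.1 z.2).connected_induce_support
    · rw [List.coe_toFinset]
      exact cliqueFreeOn_support_of_length_eq_dist (hgeodesic z.1 z.2)
  have sym2_eq {z z' : κ × κ} (h : circuit z = circuit z') :
      s(z.1, z.2) = s(z'.1, z'.2) := by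
    refine sym2_eq_of_support_eq (hgeodesic _ _) (hgeodesic _ _) fun k ↦ ?_
    have mem_support_iff (z : κ × κ) : k ∈ (geodesic z.1 z.2).support ↔ e k ∈ circuit z := by
      simp only [circuit, Function.mem_support, hb.sum_apply_pivot]
      simp
    rw [mem_support_iff, mem_support_iff, h]
  have circuit_out_injective : Function.Injective fun z : Sym2 κ ↦ circuit (Quot.out z) :=
    fun z z' h ↦ z.out_eq.symm.trans ((sym2_eq h).trans z'.out_eq)
  calc (finrank (ZMod 2) W + 1).choose 2 = Nat.card (Sym2 κ) := by
        rw [Nat.card_eq_fintype_card, Sym2.card, finrank_eq_card_basis b]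
    _ = (range fun z : Sym2 κ ↦ circuit (Quot.out z)).ncard :=
        (ncard_range_of_injective circuit_out_injective).symm
    _ ≤ {s | IsCircuit W s}.ncard :=
        ncard_le_ncard (range_subset_iff.2 fun z ↦ isCircuit_circuit _)

end Binary

section CycleSpace

variable {V : Type*} (G : SimpleGraph V)

/-- The coboundary modulo 2 of a vertex labelling: an edge is labelled by the sum of the labels of
its endpoints. -/
def coboundary : (V → ZMod 2) →ₗ[ZMod 2] (G.edgeSet → ZMod 2) where
  toFun f e := Sym2.lift ⟨fun a b ↦ f a + f b, fun _ _ ↦ add_comm _ _⟩ (e : Sym2 V)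
  map_add' f g := by
    ext ⟨e, -⟩
    induction e with | h a b => exact add_add_add_comm (f a) (g a) (f b) (g b)
  map_smul' r f := by
    ext ⟨e, -⟩
    induction e with | h a b => exact (mul_add r (f a) (f b)).symm

variable {G}

theorem coboundary_apply (f : V → ZMod 2) {a b : V} (h : s(a, b) ∈ G.edgeSet) :
    coboundary G f ⟨s(a, b), h⟩ = f a + f b :=
  rfl

theorem coboundary_single_apply_of_notMem [DecidableEq V] {v : V} {e : G.edgeSet}
    (h : v ∉ (e : Sym2 V)) : coboundary G (Pi.single v 1) e = 0 := by
  obtain ⟨⟨a, b⟩, he⟩ := e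
  obtain ⟨ha, hb⟩ := not_or.1 (mt Sym2.mem_iff.2 h)
  exact (coboundary_apply _ he).trans
    (by rw [Pi.single_eq_of_ne' ha, Pi.single_eq_of_ne' hb, add_zero])

/-- The spanning subgraph whose edges are those with a nonzero label. -/
def supportGraph (w : G.edgeSet → ZMod 2) : SimpleGraph V :=
  .fromEdgeSet ((↑) '' w.support)

theorem supportGraph_adj_of_ne_zero {w : G.edgeSet → ZMod 2} {a b : V} (hab : s(a, b) ∈ G.edgeSet)
    (h : w ⟨s(a, b), hab⟩ ≠ 0) : (supportGraph w).Adj a b :=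
  (SimpleGraph.fromEdgeSet_adj _).2 ⟨⟨_, h, rfl⟩, G.ne_of_adj hab⟩

theorem edgeSet_supportGraph_subset (w : G.edgeSet → ZMod 2) :
    (supportGraph w).edgeSet ⊆ (↑) '' w.support :=
  (SimpleGraph.edgeSet_fromEdgeSet _).trans_subset sdiff_subset

theorem supportGraph_le (w : G.edgeSet → ZMod 2) : supportGraph w ≤ G :=
  SimpleGraph.edgeSet_subset_edgeSet.1 ((edgeSet_supportGraph_subset w).trans (by simp))

variable (G) [Fintype G.edgeSet]

/-- The cycle space modulo 2 of a graph, as the space of edge labellings orthogonal to all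
coboundaries. -/
def cycleSpace : Submodule (ZMod 2) (G.edgeSet → ZMod 2) :=
  LinearMap.BilinForm.orthogonal (dotProductBilin (ZMod 2) (ZMod 2))
    (LinearMap.range (coboundary G))

variable {G}

theorem mem_cycleSpace {w : G.edgeSet → ZMod 2} :
    w ∈ cycleSpace G ↔ ∀ f, coboundary G f ⬝ᵥ w = 0 := by
  simp [cycleSpace]

theorem ncard_edgeSet_add_one_le [Finite V] [Nonempty V] :
    G.edgeSet.ncard + 1 ≤ Nat.card V + finrank (ZMod 2) (cycleSpace G) := by
  have := Fintype.ofFinite V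
  have finrank_ker_pos : 0 < finrank (ZMod 2) (LinearMap.ker (coboundary G)) := by
    refine Submodule.one_le_finrank_iff.2 ((Submodule.ne_bot_iff _).2 ⟨1, ?_, one_ne_zero⟩)
    ext ⟨⟨a, b⟩, -⟩
    exact CharTwo.add_self_eq_zero 1
  have finrank_orthogonal := LinearMap.BilinForm.finrank_add_finrank_orthogonal'
    (B := dotProductBilin (ZMod 2) (ZMod 2)) (LinearMap.range (coboundary G))
  have finrank_range_add := (coboundary G).finrank_range_add_finrank_ker
  rw [finrank_fintype_fun_eq_card] at finrank_orthogonal finrank_range_add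
  rw [← Nat.card_coe_set_eq, Nat.card_eq_fintype_card, Nat.card_eq_fintype_card, cycleSpace]
  omega

-- A bridge separates its endpoints, and the indicator of one side has a coboundary which meets `w`
-- in that bridge only.
theorem not_isBridge_supportGraph {w : G.edgeSet → ZMod 2} (hw : w ∈ cycleSpace G) {a b : V}
    (hab : s(a, b) ∈ G.edgeSet) (hwab : w ⟨s(a, b), hab⟩ ≠ 0) :
    ¬ (supportGraph w).IsBridge s(a, b) := by
  classical
  intro hbridge
  let H := (supportGraph w).deleteEdges {s(a, b)}
  have not_reachable : ¬ H.Reachable a b := SimpleGraph.isBridge_iff.1 hbridge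
  let f (x : V) : ZMod 2 := if H.Reachable a x then 1 else 0
  have f_eq_of_adj {x y : V} (h : H.Adj x y) : f x = f y :=
    if_congr ⟨fun hx ↦ hx.trans h.reachable, fun hy ↦ hy.trans h.reachable.symm⟩ rfl rfl
  have coboundary_mul_eq_zero : ∀ e ≠ ⟨s(a, b), hab⟩, coboundary G f e * w e = 0 := by
    rintro ⟨⟨x, y⟩, hxy⟩ hne
    by_cases hwxy : w ⟨s(x, y), hxy⟩ = 0
    · exact mul_eq_zero_of_right _ hwxy
    · have hadj : H.Adj x y := SimpleGraph.deleteEdges_adj.2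
        ⟨supportGraph_adj_of_ne_zero hxy hwxy, fun h ↦ hne (Subtype.ext h)⟩
      refine mul_eq_zero_of_left ?_ _
      exact (coboundary_apply f hxy).trans (by rw [f_eq_of_adj hadj, CharTwo.add_self_eq_zero])
  apply hwab
  calc w ⟨s(a, b), hab⟩ = coboundary G f ⟨s(a, b), hab⟩ * w ⟨s(a, b), hab⟩ := by
        simp [coboundary_apply, f, not_reachable]
    _ = coboundary G f ⬝ᵥ w := (Fintype.sum_eq_single _ coboundary_mul_eq_zero).symm
    _ = 0 := mem_cycleSpace.1 hw f

theorem exists_isCycle_edgeSet_subset {w : G.edgeSet → ZMod 2} (hw : w ∈ cycleSpace G)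
    (hw0 : w ≠ 0) : ∃ (u : V) (c : G.Walk u u), c.IsCycle ∧ c.edgeSet ⊆ (↑) '' w.support := by
  obtain ⟨⟨⟨a, b⟩, hab⟩, hwab⟩ := Function.ne_iff.1 hw0
  have not_isAcyclic : ¬ (supportGraph w).IsAcyclic := fun h ↦
    not_isBridge_supportGraph hw hab hwab
      (SimpleGraph.isAcyclic_iff_forall_adj_isBridge.1 h (supportGraph_adj_of_ne_zero hab hwab))
  simp only [SimpleGraph.IsAcyclic, not_forall, not_not] at not_isAcyclic
  obtain ⟨u, c, hc⟩ := not_isAcyclic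
  refine ⟨u, c.mapLe (supportGraph_le w), hc.mapLe _, ?_⟩
  rw [SimpleGraph.Walk.edgeSet_mapLe_eq_edgeSet]
  exact Subset.trans (fun _ he ↦ c.edges_subset_edgeSet he) (edgeSet_supportGraph_subset w)

end CycleSpace

section WalkVector

variable {V : Type*} [DecidableEq V] {G : SimpleGraph V} {u v : V}

/-- The number of times that a walk traverses each edge, modulo 2. -/
def walkVector (p : G.Walk u v) : G.edgeSet → ZMod 2 :=
  fun e ↦ p.edges.count (e : Sym2 V)

theorem walkVector_cons {a : V} (h : G.Adj a u) (p : G.Walk u v) :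
    walkVector (.cons h p) = Pi.single ⟨s(a, u), G.mem_edgeSet.2 h⟩ 1 + walkVector p := by
  ext e
  simp only [walkVector, SimpleGraph.Walk.edges_cons, List.count_cons, Pi.add_apply,
    Pi.single_apply, Subtype.ext_iff, beq_iff_eq, eq_comm (a := (e : Sym2 V))]
  split <;> simp [add_comm]

theorem walkVector_eq_zero {p : G.Walk u v} {e : G.edgeSet} (he : (e : Sym2 V) ∉ p.edgeSet) :
    walkVector p e = 0 := by
  rw [walkVector, List.count_eq_zero_of_not_mem he, Nat.cast_zero]

theorem support_walkVector {p : G.Walk u v} (hp : p.IsTrail) :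
    (walkVector p).support = (↑) ⁻¹' p.edgeSet := by
  ext e
  refine ⟨fun he ↦ by_contra fun hep ↦ he (walkVector_eq_zero hep), fun he ↦ ?_⟩
  rw [Function.mem_support, walkVector, hp.count_edges_eq_one he, Nat.cast_one]
  exact one_ne_zero

variable [Fintype G.edgeSet]

theorem coboundary_dotProduct_walkVector (f : V → ZMod 2) (p : G.Walk u v) :
    coboundary G f ⬝ᵥ walkVector p = f u + f v := by
  induction p with
  | nil => simp [walkVector, dotProduct, CharTwo.add_self_eq_zero]
  | cons h p ih =>
    rw [walkVector_cons, dotProduct_add, dotProduct_single_one, ih, coboundary_apply, ← add_assoc,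
      CharTwo.add_cancel_right]

theorem walkVector_mem_cycleSpace (p : G.Walk u u) : walkVector p ∈ cycleSpace G :=
  mem_cycleSpace.2 fun f ↦
    (coboundary_dotProduct_walkVector f p).trans (CharTwo.add_self_eq_zero _)

end WalkVector

section Cycles

variable {V : Type*} (G : SimpleGraph V)

/-- The edge sets of the cycles of a graph. A cycle in the sense of this set has no base point and
no orientation. -/
def cycleEdgeSets : Set (Set (Sym2 V)) :=
  {s | ∃ (u : V) (c : G.Walk u u), c.IsCycle ∧ c.edgeSet = s}

variable {G}

theorem image_mem_cycleEdgeSets [Fintype G.edgeSet] {s : Set G.edgeSet}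
    (hs : IsCircuit (cycleSpace G) s) : (↑) '' s ∈ cycleEdgeSets G := by
  classical
  obtain ⟨⟨w, hw, hw0, rfl⟩, hmin⟩ := hs
  obtain ⟨u, c, hc, hcw⟩ := exists_isCycle_edgeSet_subset hw hw0
  refine ⟨u, c, hc, hcw.antisymm (image_subset_iff.2 ?_)⟩
  have support_eq := support_walkVector hc.isTrail
  refine hmin ⟨walkVector c, walkVector_mem_cycleSpace c, ?_, support_eq⟩
    ((preimage_mono hcw).trans (preimage_image_eq _ Subtype.val_injective).le)
  obtain ⟨e, he⟩ :=
    List.exists_mem_of_ne_nil c.edges (mt SimpleGraph.Walk.edges_eq_nil.1 hc.not_nil)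
  have : (⟨e, c.edges_subset_edgeSet he⟩ : G.edgeSet) ∈ (walkVector c).support := support_eq ▸ he
  exact Function.ne_iff.2 ⟨_, this⟩

-- The closed walk uses only two edges at `v`, and `S` separates them: the boundary of the indicator
-- at `v` is 1.
theorem indicator_walkVector_notMem_cycleSpace [DecidableEq V] [Fintype G.edgeSet] {a b v : V}
    (hav : G.Adj a v) (hvb : G.Adj v b) {q : G.Walk b a} (hq : v ∉ q.support) {S : Set G.edgeSet}
    (ha : ⟨s(a, v), G.mem_edgeSet.2 hav⟩ ∈ S) (hb : ⟨s(v, b), G.mem_edgeSet.2 hvb⟩ ∉ S) :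
    S.indicator (walkVector (.cons hav (.cons hvb q))) ∉ cycleSpace G := by
  classical
  have notMem_edgeSet {e : Sym2 V} (hve : v ∈ e) : e ∉ q.edgeSet := fun he ↦
    hq (q.mem_support_of_mem_edges he hve)
  have coboundary_mul_eq_zero : ∀ e ≠ ⟨s(a, v), G.mem_edgeSet.2 hav⟩,
      coboundary G (Pi.single v 1) e *
        S.indicator (walkVector (.cons hav (.cons hvb q))) e = 0 := by
    intro e hne
    by_cases hve : v ∈ (e : Sym2 V)
    · refine mul_eq_zero_of_right _ (indicator_apply_eq_zero.2 fun heS ↦ walkVector_eq_zero ?_)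
      intro he
      rw [SimpleGraph.Walk.edgeSet_cons, SimpleGraph.Walk.edgeSet_cons] at he
      obtain he | he | he := he
      · exact hne (Subtype.ext he)
      · exact hb ((Subtype.ext he : e = ⟨s(v, b), G.mem_edgeSet.2 hvb⟩) ▸ heS)
      · exact notMem_edgeSet hve he
    · exact mul_eq_zero_of_left (coboundary_single_apply_of_notMem hve) _
  intro hmem
  have dotProduct_eq := (Fintype.sum_eq_single _ coboundary_mul_eq_zero).symm.trans
    (mem_cycleSpace.1 hmem (Pi.single v 1))
  have hne : (⟨s(a, v), G.mem_edgeSet.2 hav⟩ : G.edgeSet) ≠ ⟨s(v, b), G.mem_edgeSet.2 hvb⟩ :=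
    fun h ↦ hb (h ▸ ha)
  rw [indicator_of_mem ha, walkVector_cons, walkVector_cons, Pi.add_apply, Pi.add_apply,
    Pi.single_eq_same, Pi.single_eq_of_ne hne,
    walkVector_eq_zero (notMem_edgeSet (Sym2.mem_mk_right a v)),
    coboundary_apply, Pi.single_eq_same, Pi.single_eq_of_ne hav.ne] at dotProduct_eq
  simp at dotProduct_eq

theorem mem_of_indicator_mem_cycleSpace [Fintype G.edgeSet] {v : V}
    (hv : (G.induce ({v}ᶜ : Set V)).Preconnected) {S : Set G.edgeSet}
    (hS : ∀ w ∈ cycleSpace G, S.indicator w ∈ cycleSpace G) {e e' : G.edgeSet} (he : e ∈ S)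
    (hve : v ∈ (e : Sym2 V)) (hve' : v ∈ (e' : Sym2 V)) : e' ∈ S := by
  classical
  obtain ⟨e, heG⟩ := e
  obtain ⟨e', heG'⟩ := e'
  obtain ⟨a, hea⟩ := hve
  obtain rfl : e = s(a, v) := hea.trans Sym2.eq_swap
  obtain ⟨b, rfl⟩ := hve'
  obtain ⟨q⟩ := hv ⟨b, (G.ne_of_adj heG').symm⟩ ⟨a, G.ne_of_adj heG⟩
  let q' : G.Walk b a := q.map (SimpleGraph.Embedding.induce _).toHom
  have support_q' : q'.support = q.support.map (↑) := q.support_map _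
  have hq' : v ∉ q'.support := by simp [support_q']
  by_contra hb
  exact indicator_walkVector_notMem_cycleSpace heG heG' hq' he hb
    (hS _ (walkVector_mem_cycleSpace _))

theorem isIndecomposable_cycleSpace [Fintype G.edgeSet] (hconn : G.Preconnected)
    (h2conn : ∀ v, (G.induce ({v}ᶜ : Set V)).Preconnected) : IsIndecomposable (cycleSpace G) := by
  intro S hS
  let touches (v : V) : Prop := ∃ e ∈ S, v ∈ (e : Sym2 V)
  have mem_of_touches {v : V} : touches v → ∀ e : G.edgeSet, v ∈ (e : Sym2 V) → e ∈ S :=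
    fun ⟨_, he, hve⟩ _ ↦ mem_of_indicator_mem_cycleSpace (h2conn v) hS he hve
  have touches_of_adj {u v : V} (huv : G.Adj u v) (hu : touches u) : touches v :=
    ⟨⟨s(u, v), huv⟩, mem_of_touches hu _ (Sym2.mem_mk_left u v), Sym2.mem_mk_right u v⟩
  rcases S.eq_empty_or_nonempty with hempty | ⟨⟨⟨a, b⟩, hab⟩, habS⟩
  · exact .inl hempty
  refine .inr (eq_univ_of_forall ?_)
  rintro ⟨⟨x, y⟩, hxy⟩
  have touches_eq : touches a = touches x := apply_eq_of_reachable
    (fun u v huv ↦ propext ⟨touches_of_adj huv, touches_of_adj huv.symm⟩) (hconn a x)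
  exact mem_of_touches (touches_eq ▸ ⟨_, habS, Sym2.mem_mk_left a b⟩) _ (Sym2.mem_mk_left x y)

theorem choose_two_le_ncard_cycleEdgeSets [Finite V] [Fintype G.edgeSet] (hconn : G.Preconnected)
    (h2conn : ∀ v, (G.induce ({v}ᶜ : Set V)).Preconnected) :
    (finrank (ZMod 2) (cycleSpace G) + 1).choose 2 ≤ (cycleEdgeSets G).ncard := by
  calc (finrank (ZMod 2) (cycleSpace G) + 1).choose 2
      ≤ {s | IsCircuit (cycleSpace G) s}.ncard :=
        choose_two_le_ncard_circuits (isIndecomposable_cycleSpace hconn h2conn)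
    _ = ((fun s ↦ ((↑) '' s : Set (Sym2 V))) '' {s | IsCircuit (cycleSpace G) s}).ncard :=
        (ncard_image_of_injective _ Subtype.val_injective.image_injective).symm
    _ ≤ (cycleEdgeSets G).ncard :=
        ncard_le_ncard (image_subset_iff.2 fun _ ↦ image_mem_cycleEdgeSets)

theorem ncard_cycleEdgeSets_le [Finite V] (hcyc : ∀ (u v : V) (c₁ : G.Walk u u) (c₂ : G.Walk v v),
    c₁.IsCycle → c₂.IsCycle → c₁.length = c₂.length → c₁.edgeSet = c₂.edgeSet) :
    (cycleEdgeSets G).ncard ≤ Nat.card V - 2 := by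
  classical
  have := Fintype.ofFinite V
  have ncard_edgeSet {u : V} {c : G.Walk u u} (hc : c.IsCycle) : c.edgeSet.ncard = c.length := by
    rw [← c.coe_edges_toFinset, ncard_coe_finset, List.toFinset_card_of_nodup hc.edges_nodup,
      c.length_edges]
  have maps_to : ∀ s ∈ cycleEdgeSets G, s.ncard ∈ Icc 3 (Nat.card V) := by
    rintro _ ⟨u, c, hc, rfl⟩
    rw [ncard_edgeSet hc, Nat.card_eq_fintype_card]
    exact ⟨hc.three_le_length, by simpa using hc.support_nodup.length_le_card⟩
  have inj_on : InjOn ncard (cycleEdgeSets G) := by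
    rintro _ ⟨u, c, hc, rfl⟩ _ ⟨v, d, hd, rfl⟩ h
    rw [ncard_edgeSet hc, ncard_edgeSet hd] at h
    exact hcyc u v c d hc hd h
  calc (cycleEdgeSets G).ncard ≤ (Icc 3 (Nat.card V)).ncard :=
        ncard_le_ncard_of_injOn ncard maps_to inj_on
    _ = Nat.card V - 2 := by simp

end Cycles

theorem le_floor_of_choose_two_le {r m : ℕ} (h : (r + 1).choose 2 ≤ m) :
    r ≤ ⌊(√(8 * m + 1) - 1) / 2⌋₊ := by
  have choose_cast : ((r + 1).choose 2 : ℝ) = (r + 1) * r / 2 := by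
    rw [Nat.cast_choose_two]
    push_cast
    ring
  have h_cast : ((r + 1).choose 2 : ℝ) ≤ m := by exact_mod_cast h
  have : (2 * r + 1 : ℝ) ≤ √(8 * m + 1) := Real.le_sqrt_of_sq_le (by nlinarith)
  exact Nat.le_floor (by linarith)

theorem stmt_2_general {V : Type*} [Finite V] (G : SimpleGraph V) (hconn : G.Connected)
    (h2conn : ∀ v : V, (G.induce ({v}ᶜ : Set V)).Connected)
    (hcyc : ∀ (u v : V) (c₁ : G.Walk u u) (c₂ : G.Walk v v),
      c₁.IsCycle → c₂.IsCycle → c₁.length = c₂.length → c₁.edgeSet = c₂.edgeSet) :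
    G.edgeSet.ncard ≤ Nat.card V + ⌊(√(8 * Nat.card V - 15) - 3) / 2⌋₊ := by
  have := Fintype.ofFinite G.edgeSet
  have := hconn.nonempty
  have two_le_card : 2 ≤ Nat.card V := by
    obtain ⟨v⟩ := hconn.nonempty
    obtain ⟨⟨u, hu⟩⟩ := (h2conn v).nonempty
    exact Finite.one_lt_card_iff_nontrivial.2 ⟨u, v, hu⟩
  have finrank_le := le_floor_of_choose_two_le
    ((choose_two_le_ncard_cycleEdgeSets hconn.preconnected fun v ↦ (h2conn v).preconnected).trans
      (ncard_cycleEdgeSets_le hcyc))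
  have floor_eq : ⌊(√(8 * Nat.card V - 15) - 3) / 2⌋₊ =
      ⌊(√(8 * (Nat.card V - 2 : ℕ) + 1) - 1) / 2⌋₊ - 1 := by
    rw [← Nat.floor_sub_one, Nat.cast_sub two_le_card]
    ring_nf
  have := ncard_edgeSet_add_one_le (G := G)
  omega

/-- For every integer n ≥ 3, every 2-connected simple graph on n
vertices in which no two cycles have the same length has at most
n + ⌊(√(8n−15)−3)/2⌋ edges.  Here 2-connected means: n ≥ 3, G is connected, and
G remains connected after deleting any single vertex. -/
theorem stmt_2 (n : ℕ) (hn : 3 ≤ n) (G : SimpleGraph (Fin n))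
    (hconn : G.Connected)
    (h2conn : ∀ v : Fin n, (G.induce ({v}ᶜ : Set (Fin n))).Connected)
    (hcyc : ∀ (u v : Fin n) (c₁ : G.Walk u u) (c₂ : G.Walk v v),
      c₁.IsCycle → c₂.IsCycle → c₁.length = c₂.length →
        c₁.edges.toFinset = c₂.edges.toFinset) :
    G.edgeSet.ncard ≤ n + ⌊(Real.sqrt (8 * n - 15) - 3) / 2⌋₊ := by
  simpa using stmt_2_general G hconn h2conn fun u v c₁ c₂ h₁ h₂ hlen ↦ by
    rw [← c₁.coe_edges_toFinset, ← c₂.coe_edges_toFinset, hcyc u v c₁ c₂ h₁ h₂ hlen]
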